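/- Let ζ(t) : [0, L_ζ] → ℂ and z(s) : [0, L_z] → ℂ be arc-length parametrizations of two Dini-smooth Jordan arcs that intersect only at the common endpoint z(0) = ζ(0), and suppose the smallest angle formed by the two arcs at this point is μπ ∈ [0, π] (i.e. the angle in [0,π] between the one-sided tangent directions z'(0) and ζ'(0) equals μπ). Then for every ε > 0 there exists δ > 0 such that for every t ∈ (0, δ), the total variation over (0, δ) of any continuous branch of the argument s ↦ arg(z(s) − ζ(t)) is at most π(1−μ) + ε. -/

import Mathlib

open Filter Topology MeasureTheory Set

noncomputable section

/-- The supremum norm of `f` over the set `Γ`. -/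
def supNorm (Γ : Set ℂ) (f : ℂ → ℂ) : ℝ := sSup ((fun z => ‖f z‖) '' Γ)

/-- `Γ` is a Jordan curve: the image of a continuous `2π`-periodic map `ℝ → ℂ` that is
injective modulo the period. -/
def IsJordanCurve (Γ : Set ℂ) : Prop :=
  ∃ f : ℝ → ℂ, Continuous f ∧ Function.Periodic f (2 * Real.pi) ∧
    (∀ s t : ℝ, f s = f t → ∃ n : ℤ, t - s = n * (2 * Real.pi)) ∧
    Γ = Set.range f

/-- The modulus of continuity of `g` on the interval `[a, b]`, evaluated at `t`. -/
def modCont (g : ℝ → ℂ) (a b t : ℝ) : ℝ :=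
  sSup {d : ℝ | ∃ s₁ ∈ Set.Icc a b, ∃ s₂ ∈ Set.Icc a b, |s₁ - s₂| ≤ t ∧ d = ‖g s₁ - g s₂‖}

/-- `γ`, with derivative `γ'`, parametrizes a Dini-smooth Jordan arc on `[a, b]`:
`γ'` is continuous and nonvanishing on `[a, b]` and its modulus of continuity `ω`
satisfies `∫₀¹ ω(t)/t dt < ∞`. -/
structure IsDiniSmoothArc (γ γ' : ℝ → ℂ) (a b : ℝ) : Prop where
  lt : a < b
  inj : Set.InjOn γ (Set.Icc a b)
  deriv : ∀ s ∈ Set.Icc a b, HasDerivWithinAt γ (γ' s) (Set.Icc a b) s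
  cont : ContinuousOn γ' (Set.Icc a b)
  nonzero : ∀ s ∈ Set.Icc a b, γ' s ≠ 0
  dini : MeasureTheory.IntegrableOn (fun t => modCont γ' a b t / t) (Set.Ioc (0 : ℝ) 1)

/-- A piecewise Dini-smooth Jordan curve: a Jordan curve which is the union of finitely many
Dini-smooth arcs. -/
def IsPiecewiseDiniSmoothJordanCurve (Γ : Set ℂ) : Prop :=
  IsJordanCurve Γ ∧
    ∃ (N : ℕ) (γ γ' : Fin N → ℝ → ℂ) (a b : Fin N → ℝ),
      (∀ i, IsDiniSmoothArc (γ i) (γ' i) (a i) (b i)) ∧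
      Γ = ⋃ i, γ i '' Set.Icc (a i) (b i)

/-- The unbounded connected component `Ω` of the complement of `Γ` (in the finite plane). -/
def exteriorDomain (Γ : Set ℂ) : Set ℂ :=
  {z | z ∈ Γᶜ ∧ ¬ Bornology.IsBounded (connectedComponentIn Γᶜ z)}

/-- `φ` is the canonical exterior conformal map of `Γ` onto `{|w| > 1}` with `φ(∞) = ∞` and
`φ(z)/z → c⁻¹` as `z → ∞`; the constant `c` is then the logarithmic capacity of `Γ`. -/
structure IsExteriorMap (Γ : Set ℂ) (φ : ℂ → ℂ) (c : ℝ) : Prop where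
  cpos : 0 < c
  diff : DifferentiableOn ℂ φ (exteriorDomain Γ)
  bij : Set.BijOn φ (exteriorDomain Γ) {w : ℂ | 1 < ‖w‖}
  tendsto : Filter.Tendsto (fun z => φ z / z)
    (Bornology.cobounded ℂ ⊓ Filter.principal (exteriorDomain Γ)) (nhds ((c : ℂ)⁻¹))

/-- `F` is the `n`-th Faber polynomial of `Γ`: the unique polynomial with
`φ(z)^n − F(z) → 0` as `z → ∞` in the exterior domain. -/
def IsFaberPoly (Γ : Set ℂ) (φ : ℂ → ℂ) (n : ℕ) (F : Polynomial ℂ) : Prop :=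
  Filter.Tendsto (fun z => φ z ^ n - F.eval z)
    (Bornology.cobounded ℂ ⊓ Filter.principal (exteriorDomain Γ)) (nhds 0)

/-- `ψ` is the inverse of `φ`, extended to a homeomorphism of `{|w| ≥ 1}` onto the closure
of the exterior domain; on the unit circle it parametrizes `Γ`. -/
structure IsExteriorParam (Γ : Set ℂ) (φ ψ : ℂ → ℂ) : Prop where
  cont : ContinuousOn ψ {w : ℂ | 1 ≤ ‖w‖}
  inj : Set.InjOn ψ {w : ℂ | 1 ≤ ‖w‖}
  inv : ∀ w : ℂ, 1 < ‖w‖ → ψ w ∈ exteriorDomain Γ ∧ φ (ψ w) = w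
  boundary : ∀ w : ℂ, ‖w‖ = 1 → ψ w ∈ Γ
  boundary_surj : ∀ z ∈ Γ, ∃ w : ℂ, ‖w‖ = 1 ∧ ψ w = z

/-- `T` is the `n`-th Chebyshev polynomial of `Γ`: the monic polynomial of degree `n`
minimizing the supremum norm over `Γ`. -/
def IsChebyshevPoly (Γ : Set ℂ) (n : ℕ) (T : Polynomial ℂ) : Prop :=
  T.Monic ∧ T.natDegree = n ∧
    ∀ P : Polynomial ℂ, P.Monic → P.natDegree = n →
      supNorm Γ (fun z => T.eval z) ≤ supNorm Γ (fun z => P.eval z)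

/-- `v` is a secant-argument function of `Γ = ψ(unit circle)` at `θ` (relative to `α` with
`α < θ < α + 2π`): a bounded-variation branch of `t ↦ arg (ψ(e^{it}) − ψ(e^{iθ}))` on
`[α, α + 2π]`, continuous on `[α, θ)` and on `(θ, α + 2π]`, normalized by `v θ = v(θ+)`
and by requiring the jump `v(θ+) − v(θ−)` to lie in `[0, 2π]`. -/
structure IsSecantArg (ψ : ℂ → ℂ) (θ α : ℝ) (v : ℝ → ℝ) : Prop where
  hα : α < θ
  hθ : θ < α + 2 * Real.pi
  bv : BoundedVariationOn v (Set.Icc α (α + 2 * Real.pi))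
  contBefore : ContinuousOn v (Set.Ico α θ)
  contAfter : ContinuousOn v (Set.Ioc θ (α + 2 * Real.pi))
  rightCont : ContinuousWithinAt v (Set.Ici θ) θ
  jump_mem : ∃ L : ℝ, Filter.Tendsto v (nhdsWithin θ (Set.Iio θ)) (nhds L) ∧
    v θ - L ∈ Set.Icc 0 (2 * Real.pi)
  branch : ∀ t ∈ Set.Icc α (α + 2 * Real.pi), t ≠ θ →
    Complex.exp (Complex.I * (v t : ℂ))
      = (ψ (Complex.exp (Complex.I * (t : ℂ))) - ψ (Complex.exp (Complex.I * (θ : ℂ))))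
        / ((‖ψ (Complex.exp (Complex.I * (t : ℂ))) - ψ (Complex.exp (Complex.I * (θ : ℂ)))‖ : ℂ))

/-- The exterior angle of `Γ = ψ(unit circle)` at the boundary point `ψ(e^{iθ})` equals
`lam * π`, expressed through the jump `v(θ+) − v(θ−) = lam * π` of a secant-argument
function at `θ`. -/
def HasExteriorAngleAt (ψ : ℂ → ℂ) (θ lam : ℝ) : Prop :=
  ∃ (α : ℝ) (v : ℝ → ℝ), IsSecantArg ψ θ α v ∧
    Filter.Tendsto v (nhdsWithin θ (Set.Iio θ)) (nhds (v θ - lam * Real.pi))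

/-- The set `Θ_Γ = {θ_k + 2πj}` of corner parameters modulo `2π`. -/
def cornerSet {l : ℕ} (θk : Fin l → ℝ) : Set ℝ :=
  {x | ∃ (k : Fin l) (j : ℤ), x = θk k + j * (2 * Real.pi)}

/-- `(μp, μn)` realizes the Lebesgue–Stieltjes (signed) measure `dv` of `v` on `(α, β]`:
both are finite measures and `μp − μn` has the increments of `v`. -/
structure IsLSPair (v : ℝ → ℝ) (α β : ℝ) (μp μn : MeasureTheory.Measure ℝ) : Prop where
  finp : MeasureTheory.IsFiniteMeasure μp
  finn : MeasureTheory.IsFiniteMeasure μn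
  incr : ∀ s t : ℝ, α ≤ s → s ≤ t → t ≤ β →
    (μp (Set.Ioc s t)).toReal - (μn (Set.Ioc s t)).toReal = v t - v s

/-!
Off its zeros, a branch of `arg (z - p)` has derivative `Im (z' / (z - p))`. Let `z s₀` be the point
of a short piece of the arc nearest to `p`. Along the tangent line at `z s₀` the integral of
`|Im (τ / line)|`, `τ = z' s₀`, is at most the angle under which the ray appears from `p`.
Because `s₀` is nearest and `z'` hardly varies, both `|z s - p|` and the distance of the tangent
line from `p` are at least `|s - s₀| ‖τ‖ / 4`, so replacing the arc by the line costs at most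
`20 / ‖τ‖ · ω(h) / h` at distance `h = |s - s₀|`. This is integrable by the Dini condition, so the
cost vanishes with the length of the piece. Finally, for `p = ζ t` the nearest parameter satisfies
`s₀ = O(t)`, so that the tangent ray starts at `p - t ζ'(0) + o(t)` and the angle it subtends tends
to the angle `π - μπ` between `-ζ'(0)` and `z'(0)`.
-/

open Asymptotics InnerProductGeometry
open scoped ENNReal

theorem eVariationOn_le_lintegral_enorm_deriv {E : Type*} [NormedAddCommGroup E]
    [NormedSpace ℝ E] [CompleteSpace E] {f f' : ℝ → E} {S : Set ℝ} (hS : S.OrdConnected)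
    (hf : ∀ x ∈ S, HasDerivAt f (f' x) x) (hf' : ContinuousOn f' S) :
    eVariationOn f S ≤ ∫⁻ x in S, ‖f' x‖ₑ := by
  have edist_le : ∀ x ∈ S, ∀ y ∈ S, x ≤ y → edist (f y) (f x) ≤ ∫⁻ u in Ioc x y, ‖f' u‖ₑ := by
    intro x hx y hy hxy
    have hsub : uIcc x y ⊆ S := hS.uIcc_subset hx hy
    rw [edist_eq_enorm_sub, ← intervalIntegral.integral_eq_sub_of_hasDerivAt
      (fun u hu => hf u (hsub hu)) (hf'.mono hsub).intervalIntegrable,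
      intervalIntegral.integral_of_le hxy]
    exact enorm_integral_le_lintegral_enorm _
  refine iSup_le ?_
  rintro ⟨n, u, hu, huS⟩
  calc ∑ i ∈ Finset.range n, edist (f (u (i + 1))) (f (u i))
      ≤ ∑ i ∈ Finset.range n, ∫⁻ x in Ioc (u i) (u (i + 1)), ‖f' x‖ₑ :=
        Finset.sum_le_sum fun i _ => edist_le _ (huS i) _ (huS _) (hu i.le_succ)
    _ ≤ ∑' i, ∫⁻ x in Ioc (u i) (u (i + 1)), ‖f' x‖ₑ := ENNReal.sum_le_tsum _
    _ = ∫⁻ x in ⋃ i, Ioc (u i) (u (i + 1)), ‖f' x‖ₑ :=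
        (lintegral_iUnion (fun _ => measurableSet_Ioc) hu.pairwise_disjoint_on_Ioc_succ _).symm
    _ ≤ ∫⁻ x in S, ‖f' x‖ₑ :=
        lintegral_mono_set (iUnion_subset fun i =>
          Ioc_subset_Icc_self.trans (hS.out (huS i) (huS (i + 1))))

/-- `A` is a continuous branch of the argument of `f` on `S`. Since `0 / 0 = 0`, the equation also
says that `f` has no zeros on `S`. -/
structure IsArgBranchOn (A : ℝ → ℝ) (f : ℝ → ℂ) (S : Set ℝ) : Prop where
  continuousOn : ContinuousOn A S
  exp_eq : ∀ s ∈ S, Complex.exp (Complex.I * (A s : ℂ)) = f s / ((‖f s‖ : ℝ) : ℂ)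

namespace IsArgBranchOn

variable {A : ℝ → ℝ} {f : ℝ → ℂ} {S : Set ℝ}

theorem ne_zero (h : IsArgBranchOn A f S) {s : ℝ} (hs : s ∈ S) : f s ≠ 0 := by
  intro h0
  simpa [h0] using h.exp_eq s hs

theorem sub_eq_arg_div (h : IsArgBranchOn A f S) {s x : ℝ} (hs : s ∈ S) (hx : x ∈ S)
    (hclose : A x - A s ∈ Ioc (-Real.pi) Real.pi) : A x - A s = (f x / f s).arg := by
  have hfs := norm_pos_iff.2 (h.ne_zero hs)
  have hfx := norm_pos_iff.2 (h.ne_zero hx)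
  have hratio : f x / f s
      = ((‖f x‖ / ‖f s‖ : ℝ) : ℂ) * Complex.exp (((A x - A s : ℝ) : ℂ) * Complex.I) := by
    have hexp : ((A x - A s : ℝ) : ℂ) * Complex.I
        = Complex.I * (A x : ℂ) - Complex.I * (A s : ℂ) := by
      push_cast
      ring
    have hfs' : ((‖f s‖ : ℝ) : ℂ) ≠ 0 := mod_cast hfs.ne'
    have hfx' : ((‖f x‖ : ℝ) : ℂ) ≠ 0 := mod_cast hfx.ne'
    rw [hexp, Complex.exp_sub, h.exp_eq x hx, h.exp_eq s hs]
    push_cast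
    field_simp
  rw [hratio, Complex.arg_real_mul _ (div_pos hfx hfs), Complex.arg_exp_mul_I,
    (toIocMod_eq_self Real.two_pi_pos).2 (by rwa [show -Real.pi + 2 * Real.pi = Real.pi by ring])]

theorem hasDerivAt (h : IsArgBranchOn A f S) {s : ℝ} {q : ℂ} (hS : S ∈ 𝓝 s)
    (hf : HasDerivAt f q s) : HasDerivAt A (q / f s).im s := by
  have hs : s ∈ S := mem_of_mem_nhds hS
  have hlog : HasDerivAt (fun x => Complex.log (f x / f s)) (q / f s) s := by
    have hself : f s / f s = 1 := div_self (h.ne_zero hs)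
    simpa [hself] using (hf.div_const (f s)).clog_real (by simp [hself])
  have him : HasDerivAt (fun x => A s + (f x / f s).arg) (q / f s).im s := by
    simpa [Function.comp_def, Complex.log_im] using
      (Complex.imCLM.hasFDerivAt.comp_hasDerivAt s hlog).const_add (A s)
  refine him.congr_of_eventuallyEq ?_
  have hclose : ∀ᶠ x in 𝓝 s, A x - A s ∈ Ioc (-Real.pi) Real.pi :=
    ((h.continuousOn.continuousAt hS).sub continuousAt_const).eventually_mem
      (Ioc_mem_nhds (by simp [Real.pi_pos]) (by simp [Real.pi_pos]))
  filter_upwards [hS, hclose] with x hx hxc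
  rw [← h.sub_eq_arg_div hs hx hxc]
  ring

theorem eVariationOn_le_lintegral (h : IsArgBranchOn A f S) {f' : ℝ → ℂ} (hSo : IsOpen S)
    (hSc : S.OrdConnected) (hf : ∀ s ∈ S, HasDerivAt f (f' s) s) (hf' : ContinuousOn f' S) :
    eVariationOn A S ≤ ∫⁻ s in S, ‖(f' s / f s).im‖ₑ := by
  have hfc : ContinuousOn f S := fun s hs => (hf s hs).continuousAt.continuousWithinAt
  exact eVariationOn_le_lintegral_enorm_deriv hSc
    (fun s hs => h.hasDerivAt (hSo.mem_nhds hs) (hf s hs))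
    (Complex.continuous_im.comp_continuousOn (hf'.div hfc fun _ hs => h.ne_zero hs))

end IsArgBranchOn

theorem tan_abs_arg (c : ℂ) : Real.tan |c.arg| = |c.im| / c.re := by
  rcases le_or_gt 0 c.im with h | h
  · rw [abs_of_nonneg h, abs_of_nonneg (Complex.arg_nonneg_iff.2 h), Complex.tan_arg]
  · rw [abs_of_neg h, abs_of_neg (Complex.arg_neg_iff.2 h), Real.tan_neg, Complex.tan_arg, neg_div]

theorem arctan_re_div_abs_im {c : ℂ} (hc : c.im ≠ 0) :
    Real.arctan (c.re / |c.im|) = Real.pi / 2 - |c.arg| := by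
  have harg_pos : 0 < |c.arg| := abs_pos.2 fun h => hc (Complex.arg_eq_zero_iff.1 h).2
  have harg_lt : |c.arg| < Real.pi :=
    abs_lt.2 ⟨Complex.neg_pi_lt_arg c,
      (Complex.arg_le_pi c).lt_of_ne fun h => hc (Complex.arg_eq_pi_iff.1 h).2⟩
  refine Real.arctan_eq_of_tan_eq ?_ ⟨by linarith, by linarith⟩
  rw [Real.tan_pi_div_two_sub, tan_abs_arg, inv_div]

theorem hasDerivAt_arctan_add_div_abs_im {c : ℂ} (hc : c.im ≠ 0) (s : ℝ) :
    HasDerivAt (fun x : ℝ => Real.arctan ((c.re + x) / |c.im|)) |(1 / (c + s)).im| s := by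
  have hinner : HasDerivAt (fun x : ℝ => (c.re + x) / |c.im|) (1 / |c.im|) s :=
    ((hasDerivAt_id s).const_add c.re).div_const _
  convert hinner.arctan using 1
  have him : 0 < |c.im| := abs_pos.2 hc
  have hsq : 0 < (c.re + s) * (c.re + s) + |c.im| * |c.im| :=
    add_pos_of_nonneg_of_pos (mul_self_nonneg _) (mul_pos him him)
  simp only [one_div, Complex.inv_im, Complex.normSq_apply, Complex.add_re, Complex.add_im,
    Complex.ofReal_re, Complex.ofReal_im, add_zero, abs_div, abs_neg]
  rw [← abs_mul_abs_self c.im, abs_of_pos hsq]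
  field_simp
  ring

theorem lintegral_Ioi_enorm_im_one_div_add_le_abs_arg (c : ℂ) (a : ℝ) :
    ∫⁻ s in Ioi a, ‖(1 / (c + (s : ℂ))).im‖ₑ ≤ ENNReal.ofReal |(c + a).arg| := by
  rcases eq_or_ne c.im 0 with hc | hc
  · simp [Complex.inv_im, hc]
  · have hderiv := hasDerivAt_arctan_add_div_abs_im hc
    have hlim : Tendsto (fun x : ℝ => Real.arctan ((c.re + x) / |c.im|)) atTop
        (𝓝 (Real.pi / 2)) :=
      (Real.tendsto_arctan_atTop.mono_right nhdsWithin_le_nhds).comp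
        ((tendsto_atTop_add_const_left _ c.re tendsto_id).atTop_div_const (abs_pos.2 hc))
    have hint := integrableOn_Ioi_deriv_of_nonneg' (a := a) (fun s _ => hderiv s)
      (fun _ _ => abs_nonneg _) hlim
    have harctan := arctan_re_div_abs_im (c := c + a) (by simpa using hc)
    simp only [Complex.add_re, Complex.add_im, Complex.ofReal_re, Complex.ofReal_im, add_zero]
      at harctan
    simp only [Real.enorm_eq_ofReal_abs]
    rw [← ofReal_integral_eq_lintegral_ofReal hint (ae_of_all _ fun _ => abs_nonneg _),
      integral_Ioi_of_hasDerivAt_of_nonneg' (fun s _ => hderiv s) (fun _ _ => abs_nonneg _) hlim,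
      harctan, sub_sub_cancel]

theorem abs_arg_div_le_angle (x y : ℂ) : |(x / y).arg| ≤ angle x y := by
  rcases eq_or_ne x 0 with rfl | hx
  · simpa using angle_nonneg 0 y
  rcases eq_or_ne y 0 with rfl | hy
  · simpa using angle_nonneg x 0
  exact (Complex.angle_eq_abs_arg hx hy).ge

theorem lintegral_Ioi_enorm_im_div_line_le_angle (q τ : ℂ) (a s₀ : ℝ) :
    ∫⁻ s in Ioi a, ‖(τ / (q + (s - s₀) • τ)).im‖ₑ
      ≤ ENNReal.ofReal (angle (q + (a - s₀) • τ) τ) := by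
  rcases eq_or_ne τ 0 with rfl | hτ
  · simp
  have hline : ∀ s : ℝ, (q + (s - s₀) • τ) / τ = (q / τ - s₀) + s := fun s => by
    rw [Complex.real_smul]
    push_cast
    field_simp
    ring
  calc ∫⁻ s in Ioi a, ‖(τ / (q + (s - s₀) • τ)).im‖ₑ
      = ∫⁻ s in Ioi a, ‖(1 / ((q / τ - s₀) + (s : ℂ))).im‖ₑ := by
        simp only [← hline, one_div_div]
    _ ≤ ENNReal.ofReal |((q / τ - s₀) + a).arg| :=
        lintegral_Ioi_enorm_im_one_div_add_le_abs_arg _ _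
    _ ≤ ENNReal.ofReal (angle (q + (a - s₀) • τ) τ) := by
        rw [← hline]
        exact ENNReal.ofReal_le_ofReal (abs_arg_div_le_angle _ _)

theorem norm_sub_sub_smul_le_of_norm_hasDerivWithin_sub_le {E : Type*} [NormedAddCommGroup E]
    [NormedSpace ℝ E] {γ γ' : ℝ → E} {v : E} {x y r : ℝ}
    (hγ : ∀ u ∈ uIcc x y, HasDerivWithinAt γ (γ' u) (uIcc x y) u)
    (hr : ∀ u ∈ uIcc x y, ‖γ' u - v‖ ≤ r) :
    ‖γ y - γ x - (y - x) • v‖ ≤ r * |y - x| := by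
  have hderiv : ∀ u ∈ uIcc x y,
      HasDerivWithinAt (fun w => γ w - w • v) (γ' u - v) (uIcc x y) u := fun u hu => by
    simpa using (hγ u hu).fun_sub ((hasDerivWithinAt_id u _).smul_const v)
  have hmvt := Convex.norm_image_sub_le_of_norm_hasDerivWithin_le hderiv hr
    (convex_uIcc x y) left_mem_uIcc right_mem_uIcc
  rwa [sub_sub_sub_comm, ← sub_smul] at hmvt

theorem norm_div_four_le_of_norm_sub_sub_le {E : Type*} [SeminormedAddCommGroup E] {q₀ q d : E}
    (hmin : ‖q₀‖ ≤ ‖q‖) (hd : ‖q - q₀ - d‖ ≤ ‖d‖ / 8) :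
    ‖d‖ / 4 ≤ ‖q‖ ∧ ‖d‖ / 4 ≤ ‖q₀ + d‖ := by
  have hsecant : ‖d‖ ≤ ‖q - q₀‖ + ‖q - q₀ - d‖ := norm_le_insert _ _
  have htri : ‖q - q₀‖ ≤ ‖q‖ + ‖q₀‖ := norm_sub_le _ _
  have hline : ‖q‖ ≤ ‖q₀ + d‖ + ‖q - q₀ - d‖ := by
    simpa [sub_sub] using norm_add_le (q₀ + d) (q - q₀ - d)
  constructor <;> linarith [norm_nonneg d]

theorem norm_div_sub_div_le {𝕜 : Type*} [NormedField 𝕜] {q ℓ : 𝕜} (hq : q ≠ 0) (hℓ : ℓ ≠ 0)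
    (v τ : 𝕜) : ‖v / q - τ / ℓ‖ ≤ ‖v - τ‖ / ‖q‖ + ‖τ‖ * ‖q - ℓ‖ / (‖q‖ * ‖ℓ‖) := by
  have hsplit : v / q - τ / ℓ = (v - τ) / q - τ * (q - ℓ) / (q * ℓ) := by field_simp; ring
  calc ‖v / q - τ / ℓ‖ ≤ ‖(v - τ) / q‖ + ‖τ * (q - ℓ) / (q * ℓ)‖ := hsplit ▸ norm_sub_le _ _
    _ = _ := by simp only [norm_div, norm_mul]

theorem norm_logDeriv_sub_logDeriv_tangent_le {γ γ' : ℝ → ℂ} {ω : ℝ → ℝ} {p : ℂ} {s₀ s : ℝ}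
    (hγ : ∀ u ∈ uIcc s₀ s, HasDerivWithinAt γ (γ' u) (uIcc s₀ s) u)
    (hω : ∀ u ∈ uIcc s₀ s, ‖γ' u - γ' s₀‖ ≤ ω |s - s₀|)
    (hosc : ∀ u ∈ uIcc s₀ s, ‖γ' u - γ' s₀‖ ≤ ‖γ' s₀‖ / 8)
    (hτ : γ' s₀ ≠ 0) (hmin : ‖γ s₀ - p‖ ≤ ‖γ s - p‖) :
    ‖γ' s / (γ s - p) - γ' s₀ / (γ s₀ - p + (s - s₀) • γ' s₀)‖
      ≤ 20 / ‖γ' s₀‖ * (ω |s - s₀| / |s - s₀|) := by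
  rcases eq_or_ne s s₀ with rfl | hs
  · simp
  set τ := γ' s₀
  have hdist_pos : 0 < |s - s₀| := abs_pos.2 (sub_ne_zero.2 hs)
  have hτ_pos : 0 < ‖τ‖ := norm_pos_iff.2 hτ
  have hchord : (γ s - p) - (γ s₀ - p) - (s - s₀) • τ = γ s - γ s₀ - (s - s₀) • τ := by abel
  have hd : ‖(s - s₀) • τ‖ = |s - s₀| * ‖τ‖ := by rw [norm_smul, Real.norm_eq_abs]
  have hd_pos : 0 < |s - s₀| * ‖τ‖ / 4 := div_pos (mul_pos hdist_pos hτ_pos) four_pos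
  obtain ⟨hq, hℓ⟩ := norm_div_four_le_of_norm_sub_sub_le hmin (d := (s - s₀) • τ) (by
    rw [hchord, hd]
    exact (norm_sub_sub_smul_le_of_norm_hasDerivWithin_sub_le hγ hosc).trans_eq (by ring))
  rw [hd] at hq hℓ
  have hsep : ‖(γ s - p) - (γ s₀ - p + (s - s₀) • τ)‖ ≤ ω |s - s₀| * |s - s₀| := by
    rw [← sub_sub, hchord]
    exact norm_sub_sub_smul_le_of_norm_hasDerivWithin_sub_le hγ hω
  have hω_s : ‖γ' s - τ‖ ≤ ω |s - s₀| := hω s right_mem_uIcc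
  have hω_nonneg : 0 ≤ ω |s - s₀| := (norm_nonneg _).trans hω_s
  calc _ ≤ ‖γ' s - τ‖ / ‖γ s - p‖ + ‖τ‖ * ‖(γ s - p) - (γ s₀ - p + (s - s₀) • τ)‖
          / (‖γ s - p‖ * ‖γ s₀ - p + (s - s₀) • τ‖) :=
        norm_div_sub_div_le (norm_pos_iff.1 (hd_pos.trans_le hq))
          (norm_pos_iff.1 (hd_pos.trans_le hℓ)) _ _
    _ ≤ ω |s - s₀| / (|s - s₀| * ‖τ‖ / 4) + ‖τ‖ * (ω |s - s₀| * |s - s₀|)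
          / ((|s - s₀| * ‖τ‖ / 4) * (|s - s₀| * ‖τ‖ / 4)) := by gcongr
    _ = 20 / ‖τ‖ * (ω |s - s₀| / |s - s₀|) := by field_simp; ring

theorem setLIntegral_Icc_comp_abs_sub_le (f : ℝ → ℝ≥0∞) {a b s₀ : ℝ} (hs₀ : s₀ ∈ Icc a b) :
    ∫⁻ s in Icc a b, f |s - s₀| ≤ 2 * ∫⁻ t in Ioc 0 (b - a), f t := by
  have hcover : Icc a b ⊆
      (fun s => s₀ - s) ⁻¹' Icc 0 (b - a) ∪ (fun s => s - s₀) ⁻¹' Icc 0 (b - a) := by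
    rintro s ⟨has, hsb⟩
    rcases le_total s s₀ with h | h
    · exact Or.inl ⟨by linarith, by linarith [hs₀.2]⟩
    · exact Or.inr ⟨by linarith, by linarith [hs₀.1]⟩
  have hfold : ∫⁻ t in Icc 0 (b - a), f |t| = ∫⁻ t in Ioc 0 (b - a), f t := by
    rw [setLIntegral_congr_fun measurableSet_Icc fun t ht => by rw [abs_of_nonneg ht.1],
      setLIntegral_congr Ioc_ae_eq_Icc]
  have hleft : ∫⁻ s in (fun s => s₀ - s) ⁻¹' Icc 0 (b - a), f |s - s₀|
      = ∫⁻ t in Ioc 0 (b - a), f t := by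
    simp only [abs_sub_comm _ s₀]
    rw [← hfold]
    exact (volume.measurePreserving_sub_left s₀).setLIntegral_comp_preimage_emb
      (measurableEmbedding_subLeft s₀) (fun t => f |t|) _
  have hright : ∫⁻ s in (fun s => s - s₀) ⁻¹' Icc 0 (b - a), f |s - s₀|
      = ∫⁻ t in Ioc 0 (b - a), f t := by
    rw [← hfold]
    exact (measurePreserving_sub_right volume s₀).setLIntegral_comp_preimage_emb
      (measurableEmbedding_subRight s₀) (fun t => f |t|) _
  refine (lintegral_mono_set hcover).trans ((lintegral_union_le _ _ _).trans_eq ?_)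
  rw [hleft, hright, two_mul]

theorem enorm_im_le_add_of_norm_sub_le {x y : ℂ} {C r : ℝ} (hC : 0 ≤ C) (h : ‖x - y‖ ≤ C * r) :
    ‖x.im‖ₑ ≤ ‖y.im‖ₑ + ENNReal.ofReal C * ENNReal.ofReal r := by
  rw [Real.enorm_eq_ofReal_abs, Real.enorm_eq_ofReal_abs, ← ENNReal.ofReal_mul hC,
    ← ENNReal.ofReal_add (abs_nonneg _) ((norm_nonneg _).trans h)]
  refine ENNReal.ofReal_le_ofReal ?_
  have him : |x.im - y.im| ≤ C * r := (Complex.abs_im_le_norm (x - y)).trans h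
  linarith [abs_sub_abs_le_abs_sub x.im y.im]

theorem lintegral_enorm_im_logDeriv_le_of_nearest {γ γ' : ℝ → ℂ} {ω : ℝ → ℝ} {p : ℂ}
    {a b s₀ : ℝ} (hγ : ∀ u ∈ Icc a b, HasDerivWithinAt γ (γ' u) (Icc a b) u)
    (hs₀ : s₀ ∈ Icc a b) (hτ : γ' s₀ ≠ 0) (hmin : IsMinOn (fun s => ‖γ s - p‖) (Icc a b) s₀)
    (hosc : ∀ u ∈ Icc a b, ‖γ' u - γ' s₀‖ ≤ ‖γ' s₀‖ / 8)
    (hω : ∀ u ∈ Icc a b, ∀ h, |u - s₀| ≤ h → ‖γ' u - γ' s₀‖ ≤ ω h) :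
    ∫⁻ s in Ioo a b, ‖(γ' s / (γ s - p)).im‖ₑ
      ≤ ENNReal.ofReal (angle (γ s₀ - p + (a - s₀) • γ' s₀) (γ' s₀))
        + ENNReal.ofReal (40 / ‖γ' s₀‖) * ∫⁻ t in Ioc 0 (b - a), ENNReal.ofReal (ω t / t) := by
  set τ := γ' s₀
  set line : ℝ → ℂ := fun s => γ s₀ - p + (s - s₀) • τ
  have hpointwise : ∀ s ∈ Icc a b, ‖(γ' s / (γ s - p)).im‖ₑ ≤ ‖(τ / line s).im‖ₑ
      + ENNReal.ofReal (20 / ‖τ‖) * ENNReal.ofReal (ω |s - s₀| / |s - s₀|) := by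
    intro s hs
    have hsub : uIcc s₀ s ⊆ Icc a b := ordConnected_Icc.uIcc_subset hs₀ hs
    exact enorm_im_le_add_of_norm_sub_le (by positivity) <|
      norm_logDeriv_sub_logDeriv_tangent_le (fun u hu => (hγ u (hsub hu)).mono hsub)
        (fun u hu => hω u (hsub hu) _ (abs_sub_left_of_mem_uIcc hu))
        (fun u hu => hosc u (hsub hu)) hτ (hmin hs)
  have hline : ∫⁻ s in Ioo a b, ‖(τ / line s).im‖ₑ ≤ ENNReal.ofReal (angle (line a) τ) :=
    (lintegral_mono_set Ioo_subset_Ioi_self).trans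
      (lintegral_Ioi_enorm_im_div_line_le_angle (γ s₀ - p) τ a s₀)
  have herror : ∫⁻ s in Ioo a b, ENNReal.ofReal (ω |s - s₀| / |s - s₀|)
      ≤ 2 * ∫⁻ t in Ioc 0 (b - a), ENNReal.ofReal (ω t / t) :=
    (lintegral_mono_set Ioo_subset_Icc_self).trans
      (setLIntegral_Icc_comp_abs_sub_le (fun t => ENNReal.ofReal (ω t / t)) hs₀)
  have hconst : ENNReal.ofReal (20 / ‖τ‖) * 2 = ENNReal.ofReal (40 / ‖τ‖) := by
    rw [← ENNReal.ofReal_ofNat 2, ← ENNReal.ofReal_mul (by positivity)]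
    ring_nf
  calc ∫⁻ s in Ioo a b, ‖(γ' s / (γ s - p)).im‖ₑ
      ≤ ∫⁻ s in Ioo a b, (‖(τ / line s).im‖ₑ
          + ENNReal.ofReal (20 / ‖τ‖) * ENNReal.ofReal (ω |s - s₀| / |s - s₀|)) :=
        setLIntegral_mono' measurableSet_Ioo fun s hs => hpointwise s (Ioo_subset_Icc_self hs)
    _ = (∫⁻ s in Ioo a b, ‖(τ / line s).im‖ₑ) + ENNReal.ofReal (20 / ‖τ‖)
          * ∫⁻ s in Ioo a b, ENNReal.ofReal (ω |s - s₀| / |s - s₀|) := by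
        rw [lintegral_add_left (by fun_prop), lintegral_const_mul' _ _ ENNReal.ofReal_ne_top]
    _ ≤ _ := by
        rw [← hconst, mul_assoc]
        gcongr

section Corner

variable {E ι : Type*} {l : Filter ι} {a : ℝ} {s t : ι → ℝ}

theorem isBigO_sub_of_nearest [NormedAddCommGroup E] [NormedSpace ℝ E]
    {z ζ : ℝ → E} {τ ξ : E} (hz : HasDerivWithinAt z τ (Ici a) a) (hτ : τ ≠ 0)
    (hζ : HasDerivWithinAt ζ ξ (Ici a) a) (hmeet : z a = ζ a)
    (hs : Tendsto s l (𝓝[≥] a)) (ht : Tendsto t l (𝓝[≥] a))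
    (hnear : ∀ᶠ i in l, ‖z (s i) - ζ (t i)‖ ≤ ‖z a - ζ (t i)‖) :
    (fun i => s i - a) =O[l] fun i => t i - a := by
  have hz_isBigO : (fun i => s i - a) =O[l] fun i => z (s i) - z a :=
    (HasDerivAtFilter.isTheta_sub hz hτ).2.comp_tendsto (hs.prodMk tendsto_const_pure)
  have hζ_isBigO : (fun i => ζ (t i) - ζ a) =O[l] fun i => t i - a :=
    hζ.isBigO_sub.comp_tendsto (ht.prodMk tendsto_const_pure)
  have hchord : (fun i => z (s i) - z a) =O[l] fun i => ζ (t i) - ζ a := by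
    refine IsBigO.of_bound 2 (hnear.mono fun i hi => ?_)
    rw [hmeet, norm_sub_rev (ζ a)] at hi
    have htri := norm_add_le (z (s i) - ζ (t i)) (ζ (t i) - ζ a)
    rw [sub_add_sub_cancel] at htri
    rw [hmeet]
    linarith
  exact hz_isBigO.trans (hchord.trans hζ_isBigO)

theorem isLittleO_tangent_at_nearest [NormedAddCommGroup E] [NormedSpace ℝ E]
    {z z' ζ : ℝ → E} {ξ : E} (hz : HasDerivWithinAt z (z' a) (Ici a) a)
    (hz' : ContinuousWithinAt z' (Ici a) a) (hτ : z' a ≠ 0)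
    (hζ : HasDerivWithinAt ζ ξ (Ici a) a) (hmeet : z a = ζ a)
    (hs : Tendsto s l (𝓝[≥] a)) (ht : Tendsto t l (𝓝[≥] a))
    (hnear : ∀ᶠ i in l, ‖z (s i) - ζ (t i)‖ ≤ ‖z a - ζ (t i)‖) :
    (fun i => z (s i) - ζ (t i) + (a - s i) • z' (s i) - (t i - a) • -ξ)
      =o[l] fun i => t i - a := by
  have hst : (fun i => s i - a) =O[l] fun i => t i - a :=
    isBigO_sub_of_nearest hz hτ hζ hmeet hs ht hnear
  have hz_taylor : (fun i => z (s i) - z a - (s i - a) • z' a) =o[l] fun i => t i - a :=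
    ((hasDerivWithinAt_iff_isLittleO.1 hz).comp_tendsto hs).trans_isBigO hst
  have hζ_taylor : (fun i => ζ (t i) - ζ a - (t i - a) • ξ) =o[l] fun i => t i - a :=
    (hasDerivWithinAt_iff_isLittleO.1 hζ).comp_tendsto ht
  have hz'_diff : (fun i => (s i - a) • (z' (s i) - z' a)) =o[l] fun i => t i - a := by
    have hz'_lim : (fun i => z' (s i) - z' a) =o[l] fun _ => (1 : ℝ) :=
      (isLittleO_one_iff ℝ).2 (tendsto_sub_nhds_zero_iff.2 (Tendsto.comp hz' hs))
    simpa using hst.smul_isLittleO hz'_lim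
  refine ((hz_taylor.sub hζ_taylor).sub hz'_diff).congr_left fun i => ?_
  rw [hmeet]
  module

theorem tendsto_angle_tangent_at_nearest [NormedAddCommGroup E] [InnerProductSpace ℝ E]
    {z z' ζ : ℝ → E} {ξ : E} (hz : HasDerivWithinAt z (z' a) (Ici a) a)
    (hz' : ContinuousWithinAt z' (Ici a) a) (hτ : z' a ≠ 0)
    (hζ : HasDerivWithinAt ζ ξ (Ici a) a) (hξ : ξ ≠ 0) (hmeet : z a = ζ a)
    (hs : Tendsto s l (𝓝[≥] a)) (ht : Tendsto t l (𝓝[>] a))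
    (hnear : ∀ᶠ i in l, ‖z (s i) - ζ (t i)‖ ≤ ‖z a - ζ (t i)‖) :
    Tendsto (fun i => angle (z (s i) - ζ (t i) + (a - s i) • z' (s i)) (z' (s i))) l
      (𝓝 (angle (-ξ) (z' a))) := by
  have ht_pos : ∀ᶠ i in l, 0 < t i - a :=
    (ht.eventually eventually_mem_nhdsWithin).mono fun i hi => sub_pos.2 hi
  have hrescaled : Tendsto
      (fun i => (t i - a)⁻¹ • (z (s i) - ζ (t i) + (a - s i) • z' (s i))) l (𝓝 (-ξ)) := by
    refine tendsto_sub_nhds_zero_iff.1 (Tendsto.congr' ?_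
      (isLittleO_tangent_at_nearest hz hz' hτ hζ hmeet hs
        (ht.mono_right (nhdsWithin_mono _ Ioi_subset_Ici_self)) hnear).tendsto_inv_smul_nhds_zero)
    filter_upwards [ht_pos] with i hi
    rw [smul_sub, inv_smul_smul₀ hi.ne']
  refine ((continuousAt_angle (neg_ne_zero.2 hξ) hτ).tendsto.comp
    (hrescaled.prodMk_nhds (Tendsto.comp hz' hs))).congr' ?_
  filter_upwards [ht_pos] with i hi
  exact angle_smul_left_of_pos _ _ (inv_pos.2 hi)

end Corner

theorem eventually_nhdsGT_forall_mem_Icc {a : ℝ} {p : ℝ → ℝ → Prop}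
    (h : ∀ᶠ x in 𝓝[≥] a ×ˢ 𝓝[≥] a, p x.1 x.2) :
    ∀ᶠ δ in 𝓝[>] a, ∀ s ∈ Icc a δ, ∀ t ∈ Icc a δ, p s t := by
  obtain ⟨S, hS, hp⟩ := eventually_prod_self_iff.1 h
  obtain ⟨u, hu, huS⟩ := (mem_nhdsGE_iff_exists_Icc_subset).1 hS
  filter_upwards [Ioc_mem_nhdsGT hu] with δ hδ s hs t ht
  have hsub : Icc a δ ⊆ S := (Icc_subset_Icc_right hδ.2).trans huS
  exact hp s (hsub hs) t (hsub ht)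

theorem tendsto_setLIntegral_Ioc_nhdsGT {f : ℝ → ℝ≥0∞} {a b : ℝ} (hab : a < b)
    (hf : ∫⁻ t in Ioc a b, f t ≠ ∞) :
    Tendsto (fun δ => ∫⁻ t in Ioc a δ, f t) (𝓝[>] a) (𝓝 0) := by
  have hlen : Tendsto (fun δ => ENNReal.ofReal (δ - a)) (𝓝[>] a) (𝓝 0) := by
    simpa using ENNReal.tendsto_ofReal
      ((tendsto_sub_nhds_zero_iff.2 tendsto_id).mono_left (nhdsWithin_le_nhds (s := Ioi a)))
  have hvol : Tendsto (fun δ => volume.restrict (Ioc a b) (Ioc a δ)) (𝓝[>] a) (𝓝 0) :=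
    tendsto_of_tendsto_of_tendsto_of_le_of_le tendsto_const_nhds hlen
      (fun _ => zero_le) fun δ => (Measure.restrict_apply_le _ _).trans_eq Real.volume_Ioc
  refine (tendsto_setLIntegral_zero hf hvol).congr' ?_
  filter_upwards [Ioc_mem_nhdsGT hab] with δ hδ
  rw [Measure.restrict_restrict measurableSet_Ioc,
    inter_eq_self_of_subset_left (Ioc_subset_Ioc_right hδ.2)]

theorem norm_sub_le_modCont {g : ℝ → ℂ} {a b u v h : ℝ} (hg : ContinuousOn g (Icc a b))
    (hu : u ∈ Icc a b) (hv : v ∈ Icc a b) (huv : |u - v| ≤ h) : ‖g u - g v‖ ≤ modCont g a b h := by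
  obtain ⟨C, hC⟩ := isCompact_Icc.exists_bound_of_continuousOn hg
  refine le_csSup ⟨C + C, ?_⟩ ⟨u, hu, v, hv, huv, rfl⟩
  rintro d ⟨x, hx, y, hy, -, rfl⟩
  exact (norm_sub_le _ _).trans (add_le_add (hC x hx) (hC y hy))

theorem eventually_norm_sub_le_norm_div {E : Type*} [NormedAddCommGroup E] {g : ℝ → E} {a C : ℝ}
    (hg : ContinuousWithinAt g (Ici a) a) (hga : g a ≠ 0) (hC : 0 < C) :
    ∀ᶠ x in 𝓝[≥] a ×ˢ 𝓝[≥] a, ‖g x.1 - g x.2‖ ≤ ‖g x.2‖ / C := by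
  have hfst : Tendsto (fun x : ℝ × ℝ => g x.1) (𝓝[≥] a ×ˢ 𝓝[≥] a) (𝓝 (g a)) :=
    Tendsto.comp hg tendsto_fst
  have hsnd : Tendsto (fun x : ℝ × ℝ => g x.2) (𝓝[≥] a ×ˢ 𝓝[≥] a) (𝓝 (g a)) :=
    Tendsto.comp hg tendsto_snd
  refine ((hfst.sub hsnd).norm.eventually_lt (hsnd.norm.div_const C) ?_).mono fun _ => le_of_lt
  simpa using div_pos (norm_pos_iff.2 hga) hC

theorem eventually_angle_tangent_at_nearest_le {E : Type*} [NormedAddCommGroup E]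
    [InnerProductSpace ℝ E] {z z' ζ : ℝ → E} {ξ : E} {a ε : ℝ}
    (hz : HasDerivWithinAt z (z' a) (Ici a) a) (hz' : ContinuousWithinAt z' (Ici a) a)
    (hτ : z' a ≠ 0) (hζ : HasDerivWithinAt ζ ξ (Ici a) a) (hξ : ξ ≠ 0) (hmeet : z a = ζ a)
    (hε : 0 < ε) :
    ∀ᶠ x in 𝓝[≥] a ×ˢ 𝓝[≥] a, a < x.2 → ‖z x.1 - ζ x.2‖ ≤ ‖z a - ζ x.2‖ →
      angle (z x.1 - ζ x.2 + (a - x.1) • z' x.1) (z' x.1) ≤ Real.pi - angle (z' a) ξ + ε := by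
  set near : Set (ℝ × ℝ) := {x | a < x.2 ∧ ‖z x.1 - ζ x.2‖ ≤ ‖z a - ζ x.2‖}
  have hmem : ∀ᶠ x in (𝓝[≥] a ×ˢ 𝓝[≥] a) ⊓ 𝓟 near, x ∈ near :=
    eventually_inf_principal.2 (Eventually.of_forall fun _ => id)
  have hfst : Tendsto Prod.fst ((𝓝[≥] a ×ˢ 𝓝[≥] a) ⊓ 𝓟 near) (𝓝[≥] a) :=
    tendsto_fst.mono_left inf_le_left
  have hsnd : Tendsto Prod.snd ((𝓝[≥] a ×ˢ 𝓝[≥] a) ⊓ 𝓟 near) (𝓝[>] a) :=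
    tendsto_nhdsWithin_iff.2 ⟨(tendsto_snd.mono_left inf_le_left).mono_right nhdsWithin_le_nhds,
      hmem.mono fun _ hx => hx.1⟩
  have hlim := tendsto_angle_tangent_at_nearest hz hz' hτ hζ hξ hmeet hfst hsnd
    (hmem.mono fun _ hx => hx.2)
  rw [angle_neg_left, angle_comm] at hlim
  exact (eventually_inf_principal.1 (hlim.eventually_le_const (lt_add_of_pos_right _ hε))).mono
    fun x hx hpos hnear => hx ⟨hpos, hnear⟩

theorem IsArgBranchOn.eVariationOn_le_of_oscillation_le {γ γ' : ℝ → ℂ} {ω A : ℝ → ℝ} {p : ℂ}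
    {a b α : ℝ} (hA : IsArgBranchOn A (fun s => γ s - p) (Ioo a b)) (hab : a ≤ b)
    (hγ : ∀ u ∈ Icc a b, HasDerivWithinAt γ (γ' u) (Icc a b) u) (hγ' : ContinuousOn γ' (Icc a b))
    (hτ : γ' a ≠ 0) (hosc : ∀ u ∈ Icc a b, ∀ v ∈ Icc a b, ‖γ' u - γ' v‖ ≤ ‖γ' v‖ / 8)
    (hω : ∀ u ∈ Icc a b, ∀ v ∈ Icc a b, ∀ h, |u - v| ≤ h → ‖γ' u - γ' v‖ ≤ ω h)
    (hα : ∀ s ∈ Icc a b, ‖γ s - p‖ ≤ ‖γ a - p‖ →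
      angle (γ s - p + (a - s) • γ' s) (γ' s) ≤ α) :
    eVariationOn A (Ioo a b) ≤ ENNReal.ofReal α
      + ENNReal.ofReal (80 / ‖γ' a‖) * ∫⁻ t in Ioc 0 (b - a), ENNReal.ofReal (ω t / t) := by
  have ha : a ∈ Icc a b := left_mem_Icc.2 hab
  obtain ⟨s₀, hs₀, hmin⟩ := isCompact_Icc.exists_isMinOn ⟨a, ha⟩
    (f := fun s => ‖γ s - p‖) fun u hu => ((hγ u hu).continuousWithinAt.sub_const p).norm
  have hτ_pos : 0 < ‖γ' a‖ := norm_pos_iff.2 hτ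
  have hτ_le : ‖γ' a‖ ≤ 2 * ‖γ' s₀‖ := by
    linarith [norm_sub_norm_le (γ' a) (γ' s₀), hosc a ha s₀ hs₀, norm_nonneg (γ' s₀)]
  have hτ₀_pos : 0 < ‖γ' s₀‖ := by linarith
  have hconst : 40 / ‖γ' s₀‖ ≤ 80 / ‖γ' a‖ := by
    rw [div_le_div_iff₀ hτ₀_pos hτ_pos]
    linarith
  calc eVariationOn A (Ioo a b)
      ≤ ∫⁻ s in Ioo a b, ‖(γ' s / (γ s - p)).im‖ₑ :=
        hA.eVariationOn_le_lintegral isOpen_Ioo ordConnected_Ioo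
          (fun s hs => ((hγ s (Ioo_subset_Icc_self hs)).hasDerivAt
            (Icc_mem_nhds hs.1 hs.2)).sub_const p) (hγ'.mono Ioo_subset_Icc_self)
    _ ≤ _ := lintegral_enorm_im_logDeriv_le_of_nearest hγ hs₀ (norm_pos_iff.1 hτ₀_pos) hmin
        (fun u hu => hosc u hu s₀ hs₀) fun u hu => hω u hu s₀ hs₀
    _ ≤ _ := by
        gcongr
        exact hα s₀ hs₀ (hmin ha)

theorem angle_eq_of_re_mul_conj_eq_cos {u v : ℂ} (hu : ‖u‖ = 1) (hv : ‖v‖ = 1) {θ : ℝ}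
    (hθ : θ ∈ Icc 0 Real.pi) (h : (u * starRingEnd ℂ v).re = Real.cos θ) : angle u v = θ := by
  rw [angle, hu, hv, one_mul, div_one, real_inner_comm, Complex.inner, h,
    Real.arccos_cos hθ.1 hθ.2]

theorem argument_variation_near_corner_general {z z' ζ : ℝ → ℂ} {ξ : ℂ} {L ε : ℝ} (hL : 0 < L)
    (hz : ∀ s ∈ Icc 0 L, HasDerivWithinAt z (z' s) (Icc 0 L) s) (hz' : ContinuousOn z' (Icc 0 L))
    (hz'_zero : z' 0 ≠ 0) (hdini : IntegrableOn (fun t => modCont z' 0 L t / t) (Ioc 0 1))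
    (hζ : HasDerivWithinAt ζ ξ (Ici 0) 0) (hξ : ξ ≠ 0) (hmeet : z 0 = ζ 0) (hε : 0 < ε) :
    ∀ᶠ δ in 𝓝[>] (0 : ℝ), ∀ t ∈ Ioo 0 δ, ∀ A : ℝ → ℝ,
      IsArgBranchOn A (fun s => z s - ζ t) (Ioo 0 δ) →
      eVariationOn A (Ioo 0 δ) ≤ ENNReal.ofReal (Real.pi - angle (z' 0) ξ + ε) := by
  have hL_mem : Icc 0 L ∈ 𝓝[≥] (0 : ℝ) := Icc_mem_nhdsGE hL
  have hz_zero := (hz 0 (left_mem_Icc.2 hL.le)).mono_of_mem_nhdsWithin hL_mem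
  have hz'_cont := (hz' 0 (left_mem_Icc.2 hL.le)).mono_of_mem_nhdsWithin hL_mem
  have hosc := eventually_nhdsGT_forall_mem_Icc
    (p := fun u v => ‖z' u - z' v‖ ≤ ‖z' v‖ / 8) <|
    eventually_norm_sub_le_norm_div hz'_cont hz'_zero (by norm_num)
  have hangle := eventually_nhdsGT_forall_mem_Icc
    (p := fun s t => 0 < t → ‖z s - ζ t‖ ≤ ‖z 0 - ζ t‖ →
      angle (z s - ζ t + (0 - s) • z' s) (z' s) ≤ Real.pi - angle (z' 0) ξ + ε / 2) <|
    eventually_angle_tangent_at_nearest_le hz_zero hz'_cont hz'_zero hζ hξ hmeet (half_pos hε)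
  have htail : ∀ᶠ δ in 𝓝[>] (0 : ℝ), ENNReal.ofReal (80 / ‖z' 0‖)
      * ∫⁻ t in Ioc 0 δ, ENNReal.ofReal (modCont z' 0 L t / t) ≤ ENNReal.ofReal (ε / 2) := by
    have hlim := ENNReal.Tendsto.const_mul (a := ENNReal.ofReal (80 / ‖z' 0‖))
      (tendsto_setLIntegral_Ioc_nhdsGT one_pos hdini.lintegral_lt_top.ne)
      (Or.inr ENNReal.ofReal_ne_top)
    rw [mul_zero] at hlim
    exact hlim.eventually_le_const (ENNReal.ofReal_pos.2 (half_pos hε))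
  filter_upwards [hosc, hangle, htail, Ioc_mem_nhdsGT hL]
    with δ hosc hangle htail hδ t ht A hA
  have hsub : Icc 0 δ ⊆ Icc 0 L := Icc_subset_Icc_right hδ.2
  have hvar := hA.eVariationOn_le_of_oscillation_le hδ.1.le (fun u hu => (hz u (hsub hu)).mono hsub)
    (hz'.mono hsub) hz'_zero hosc (fun u hu v hv h => norm_sub_le_modCont hz' (hsub hu) (hsub hv))
    fun s hs => hangle s hs t (Ioo_subset_Icc_self ht) ht.1
  rw [sub_zero] at hvar
  calc eVariationOn A (Ioo 0 δ)
      ≤ ENNReal.ofReal (Real.pi - angle (z' 0) ξ + ε / 2) + ENNReal.ofReal (ε / 2) :=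
        hvar.trans (by gcongr)
    _ = ENNReal.ofReal (Real.pi - angle (z' 0) ξ + ε) := by
        rw [← ENNReal.ofReal_add (by linarith [angle_le_pi (z' 0) ξ]) (half_pos hε).le, add_assoc,
          add_halves]

/-- Let `ζ : [0, Lζ] → ℂ` and `z : [0, Lz] → ℂ` be arc-length
parametrizations of two Dini-smooth Jordan arcs intersecting only at the common endpoint
`z(0) = ζ(0)`, and suppose the smallest angle formed by the two arcs there is `μπ ∈ [0, π]`,
i.e. the angle in `[0, π]` between the unit tangents `z'(0)` and `ζ'(0)` equals `μπ`
(equivalently `Re (z'(0) · conj (ζ'(0))) = cos (μπ)`). For every `ε > 0` there exists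
`δ > 0` such that for every `t ∈ (0, δ)`, every continuous branch `A` of
`s ↦ arg (z(s) − ζ(t))` on `(0, δ)` has total variation over `(0, δ)` at most
`π(1 − μ) + ε`. -/
theorem argument_variation_near_corner
    (ζ ζ' z z' : ℝ → ℂ) (Lζ Lz μ : ℝ)
    (hζ : IsDiniSmoothArc ζ ζ' 0 Lζ)
    (hz : IsDiniSmoothArc z z' 0 Lz)
    (hζunit : ∀ s ∈ Set.Icc (0 : ℝ) Lζ, ‖ζ' s‖ = 1)
    (hzunit : ∀ s ∈ Set.Icc (0 : ℝ) Lz, ‖z' s‖ = 1)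
    (hmeet : z 0 = ζ 0)
    (hinter : (z '' Set.Icc (0 : ℝ) Lz) ∩ (ζ '' Set.Icc (0 : ℝ) Lζ) = {z 0})
    (hμ : μ ∈ Set.Icc (0 : ℝ) 1)
    (hangle : (z' 0 * starRingEnd ℂ (ζ' 0)).re = Real.cos (μ * Real.pi)) :
    ∀ ε : ℝ, 0 < ε → ∃ δ : ℝ, 0 < δ ∧ δ ≤ Lζ ∧ δ ≤ Lz ∧
      ∀ t ∈ Set.Ioo (0 : ℝ) δ, ∀ A : ℝ → ℝ,
        ContinuousOn A (Set.Ioo (0 : ℝ) δ) →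
        (∀ s ∈ Set.Ioo (0 : ℝ) δ,
          Complex.exp (Complex.I * (A s : ℂ)) = (z s - ζ t) / ((‖z s - ζ t‖ : ℝ) : ℂ)) →
        eVariationOn A (Set.Ioo (0 : ℝ) δ)
          ≤ ENNReal.ofReal (Real.pi * (1 - μ) + ε) := by
  intro ε hε
  have hθ : μ * Real.pi ∈ Icc 0 Real.pi :=
    ⟨mul_nonneg hμ.1 Real.pi_pos.le, mul_le_of_le_one_left Real.pi_pos.le hμ.2⟩
  have h0ζ : (0 : ℝ) ∈ Icc 0 Lζ := left_mem_Icc.2 hζ.lt.le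
  have h0z : (0 : ℝ) ∈ Icc 0 Lz := left_mem_Icc.2 hz.lt.le
  have hvar := argument_variation_near_corner_general hz.lt hz.deriv hz.cont (hz.nonzero 0 h0z)
    hz.dini ((hζ.deriv 0 h0ζ).mono_of_mem_nhdsWithin (Icc_mem_nhdsGE hζ.lt)) (hζ.nonzero 0 h0ζ)
    hmeet hε
  rw [angle_eq_of_re_mul_conj_eq_cos (hzunit 0 h0z) (hζunit 0 h0ζ) hθ hangle,
    show Real.pi - μ * Real.pi = Real.pi * (1 - μ) by ring] at hvar
  obtain ⟨δ, hδ, hδ_pos, hδ_le⟩ :=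
    (hvar.and (Ioc_mem_nhdsGT (lt_min hζ.lt hz.lt))).exists
  exact ⟨δ, hδ_pos, hδ_le.trans (min_le_left _ _), hδ_le.trans (min_le_right _ _),
    fun t ht A hcont hexp => hδ t ht A ⟨hcont, hexp⟩⟩

end
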